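/- Let α>0, 0<p<1, and let r_{n,k} be the root-cluster weights for linear preferential attachment trees with parameter α (φ(δ)=Γ(δ+1/α)/Γ(1/α)). Then for all real x with |x| < α/(1+α), Σ_{n≥1} (Σ_{j≥1} j·r_{n,j}) x^n/n! = (α/(p+α))·((1-(1+1/α)x)^{-p/(1+α)} - (1-(1+1/α)x)^{α/(1+α)}). -/

import Mathlib

open Finset Filter Asymptotics

/-- The root-cluster weight recursion. -/
noncomputable def clusterRec (p : ℝ) (φ : ℕ → ℝ) (r : ℕ → ℕ → ℝ) (b : ℕ → ℝ) : Prop :=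
  (∀ m, b m = ∑ k ∈ Finset.Icc 1 m, r m k) ∧
  ∀ n k : ℕ, 1 ≤ n → 1 ≤ k →
    r n k =
      ∑ δ ∈ Finset.range n, ∑ s ∈ (Finset.range (δ + 1)).attach,
        (δ.choose s.1 : ℝ) * (φ δ / (δ.factorial : ℝ)) *
          ∑ f ∈ (Finset.Nat.antidiagonalTuple δ (n - 1)).filter (fun f => ∀ i, 1 ≤ f i),
            (((n - 1).factorial : ℝ) / ∏ i, ((f i).factorial : ℝ)) *
              ∑ g ∈ (Finset.Nat.antidiagonalTuple s.1 (k - 1)).filter (fun g => ∀ i, 1 ≤ g i),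
                p ^ s.1 * (1 - p) ^ (δ - s.1) *
                  (∏ i : Fin s.1,
                    r (f (Fin.castLE (Nat.lt_succ_iff.mp (Finset.mem_range.mp s.2)) i)) (g i)) *
                  ∏ j ∈ Finset.univ.filter (fun j : Fin δ => s.1 ≤ (j : ℕ)), b (f j)

/-- Partial Bell polynomials. -/
noncomputable def bellPartial (k j : ℕ) (x : ℕ → ℝ) : ℝ :=
  ∑ m ∈ (Fintype.piFinset (fun _ : Fin (k - j + 1) => Finset.range (k + 1))).filter
      (fun m : Fin (k - j + 1) → ℕ => (∑ i : Fin (k - j + 1), ((i : ℕ) + 1) * m i) = k ∧ (∑ i, m i) = j),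
    (k.factorial : ℝ) *
      ∏ i : Fin (k - j + 1), x ((i : ℕ) + 1) ^ m i /
        (((m i).factorial : ℝ) * (((i : ℕ) + 1).factorial : ℝ) ^ m i)

lemma supp (p : ℝ) (φ : ℕ → ℝ) (r : ℕ → ℕ → ℝ) (b : ℕ → ℝ) (h : clusterRec p φ r b) :
    ∀ n k : ℕ, 1 ≤ n → n < k → r n k = 0 := by
  intro n
  induction n using Nat.strong_induction_on with
  | _ n ih =>
  intro k hn hk
  rw [h.2 n k hn (by omega)]
  apply Finset.sum_eq_zero
  intro δ hδ
  apply Finset.sum_eq_zero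
  rintro ⟨s, hs⟩ -
  apply mul_eq_zero_of_right
  apply Finset.sum_eq_zero
  intro f hf
  apply mul_eq_zero_of_right
  apply Finset.sum_eq_zero
  intro g hg
  simp only [Finset.mem_filter, Finset.Nat.mem_antidiagonalTuple] at hf hg
  have hsδ : s ≤ δ := Nat.lt_succ_iff.mp (Finset.mem_range.mp hs)
  have hle : ∑ i : Fin s, f (Fin.castLE hsδ i) ≤ n - 1 := by
    rw [← hf.1]
    have := Finset.sum_map (Finset.univ : Finset (Fin s)) (Fin.castLEEmb hsδ) f
    simp only [Fin.coe_castLEEmb] at this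
    rw [← this]
    exact Finset.sum_le_sum_of_subset (Finset.subset_univ _)
  have : ∃ i : Fin s, f (Fin.castLE hsδ i) < g i := by
    by_contra! hc
    have := Finset.sum_le_sum (fun i (_ : i ∈ (Finset.univ : Finset (Fin s))) => hc i)
    omega
  obtain ⟨i, hi⟩ := this
  have hfi : f (Fin.castLE hsδ i) ≤ n - 1 := by
    rw [← hf.1]
    exact Finset.single_le_sum (fun _ _ => Nat.zero_le _) (Finset.mem_univ _)
  have h0 : r (f (Fin.castLE hsδ i)) (g i) = 0 :=
    ih _ (by omega) _ (hf.2 _) hi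
  apply mul_eq_zero_of_left
  apply mul_eq_zero_of_right
  exact Finset.prod_eq_zero (Finset.mem_univ i) h0

lemma gsum {A : Type*} [CommRing A] [Algebra ℝ A] (v : A) (r : ℕ → ℕ → ℝ)
    (hr : ∀ n k : ℕ, 1 ≤ n → n < k → r n k = 0) (s N : ℕ) (f : Fin s → ℕ)
    (hf1 : ∀ i, 1 ≤ f i) (hf : ∑ i, f i ≤ N) :
    ∑ j ∈ Finset.range (N+1), 
      ∑ g ∈ (Finset.Nat.antidiagonalTuple s j).filter (fun g => ∀ i, 1 ≤ g i),
        (∏ i, r (f i) (g i)) • v ^ j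
      = ∏ i, ∑ k ∈ Finset.Icc 1 (f i), r (f i) k • v ^ k := by
  rw [Finset.prod_univ_sum]
  rw [← Finset.sum_fiberwise_of_maps_to (t := Finset.range (N+1)) (g := fun g : Fin s → ℕ => ∑ i, g i)]
  · apply Finset.sum_congr rfl
    intro j hj
    rw [← Finset.sum_subset (s₁ := (Fintype.piFinset fun i => Finset.Icc 1 (f i)).filter (fun g => ∑ i, g i = j))]
    · apply Finset.sum_congr rfl
      intro g hg
      simp only [Finset.mem_filter] at hg
      rw [← hg.2, ← Finset.prod_pow_eq_pow_sum]
      simp only [Algebra.smul_def, Finset.prod_mul_distrib, map_prod]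
    · intro g hg
      simp only [Finset.mem_filter, Fintype.mem_piFinset, Finset.mem_Icc, Finset.Nat.mem_antidiagonalTuple] at hg ⊢
      exact ⟨hg.2, fun i => (hg.1 i).1⟩
    · intro g hg hg'
      simp only [Finset.mem_filter, Fintype.mem_piFinset, Finset.mem_Icc, Finset.Nat.mem_antidiagonalTuple] at hg hg'
      have : ∃ i, f i < g i := by
        by_contra! hc
        exact hg' ⟨fun i => ⟨hg.2 i, hc i⟩, hg.1⟩
      obtain ⟨i, hi⟩ := this
      rw [Finset.prod_eq_zero (Finset.mem_univ i) (hr _ _ (hf1 i) hi), zero_smul]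
  · intro g hg
    simp only [Fintype.mem_piFinset, Finset.mem_Icc] at hg
    have := Finset.sum_le_sum (fun i (_ : i ∈ (Finset.univ : Finset (Fin s))) => (hg i).2)
    simp only [Finset.mem_range]; omega

lemma coeff_prod_tuple {A : Type*} [CommRing A] (d n : ℕ) (F : Fin d → PowerSeries A) :
    PowerSeries.coeff n (∏ i, F i) =
      ∑ f ∈ Finset.Nat.antidiagonalTuple d n, ∏ i, PowerSeries.coeff (f i) (F i) := by
  rw [PowerSeries.coeff_prod]
  refine Finset.sum_nbij' (fun l => (l : Fin d → ℕ)) (fun f => Finsupp.equivFunOnFinite.symm f) ?_ ?_ ?_ ?_ ?_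
  · intro l hl
    simpa [Finset.Nat.mem_antidiagonalTuple] using (Finset.mem_finsuppAntidiag.mp hl).1
  · intro f hf
    rw [Finset.mem_finsuppAntidiag]
    simpa [Finset.Nat.mem_antidiagonalTuple] using hf
  · intro l hl; ext; simp
  · intro f hf; simp
  · intro l hl; rfl

lemma prod_split {A : Type*} [CommRing A] (δ s : ℕ) (hs : s ≤ δ) (P Q : Fin δ → A) :
    (∏ i : Fin s, P (Fin.castLE hs i)) * ∏ j ∈ Finset.univ.filter (fun j : Fin δ => s ≤ (j : ℕ)), Q j
      = ∏ j : Fin δ, if (j : ℕ) < s then P j else Q j := by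
  rw [Finset.prod_ite]
  congr 1
  · have := Finset.prod_map (Finset.univ : Finset (Fin s)) (Fin.castLEEmb hs) P
    simp only [Fin.coe_castLEEmb] at this
    rw [← this]
    apply Finset.prod_congr _ (fun _ _ => rfl)
    ext j
    simp only [Finset.mem_map, Finset.mem_univ, true_and, Finset.mem_filter]
    constructor
    · rintro ⟨i, rfl⟩; simp
    · intro h; exact ⟨⟨j, h⟩, by ext; simp⟩
  · simp

noncomputable def Rv {A : Type*} [CommRing A] [Algebra ℝ A] (v : A) (r : ℕ → ℕ → ℝ) (n : ℕ) : A :=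
  ∑ k ∈ Finset.Icc 1 n, r n k • v ^ k

lemma fsum {A : Type*} [CommRing A] [Algebra ℝ A] (R : ℕ → A) (b : ℕ → A)
    (hR : R 0 = 0) (hb : b 0 = 0) (δ s N : ℕ) (hs : s ≤ δ) :
    ∑ f ∈ (Finset.Nat.antidiagonalTuple δ N).filter (fun f => ∀ i, 1 ≤ f i),
      ((N.factorial : ℝ) / ∏ i, ((f i).factorial : ℝ)) •
        ((∏ i : Fin s, R (f (Fin.castLE hs i))) *
          ∏ j ∈ Finset.univ.filter (fun j : Fin δ => s ≤ (j : ℕ)), b (f j))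
    = (N.factorial : ℝ) • PowerSeries.coeff N
        ((PowerSeries.mk fun n => ((n.factorial : ℝ)⁻¹) • R n) ^ s *
          (PowerSeries.mk fun n => ((n.factorial : ℝ)⁻¹) • b n) ^ (δ - s)) := by
  set P := (PowerSeries.mk fun n => ((n.factorial : ℝ)⁻¹) • R n)
  set Q := (PowerSeries.mk fun n => ((n.factorial : ℝ)⁻¹) • b n)
  have hPQ : P ^ s * Q ^ (δ - s) = ∏ j : Fin δ, if (j : ℕ) < s then P else Q := by
    rw [← prod_split δ s hs (fun _ => P) (fun _ => Q)]
    simp only [Finset.prod_const, Finset.card_univ, Fintype.card_fin]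
    congr 2
    have h1 := Finset.card_filter_add_card_filter_not (s := (Finset.univ : Finset (Fin δ))) (fun j : Fin δ => (j : ℕ) < s)
    have h2 : (Finset.univ.filter (fun j : Fin δ => (j : ℕ) < s)).card = s := by
      rw [Fin.card_filter_val_lt]; omega
    simp only [not_lt, Finset.card_univ, Fintype.card_fin] at h1
    omega
  rw [hPQ, coeff_prod_tuple, Finset.smul_sum]
  have hz : ∀ f ∈ Finset.Nat.antidiagonalTuple δ N, f ∉ (Finset.Nat.antidiagonalTuple δ N).filter (fun f => ∀ i, 1 ≤ f i) →
      (N.factorial : ℝ) • ∏ i : Fin δ, PowerSeries.coeff (f i) (if (i : ℕ) < s then P else Q) = 0 := by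
    intro f hf hf'
    simp only [Finset.mem_filter, hf, true_and, not_forall] at hf'
    obtain ⟨i, hi⟩ := hf'
    have hi0 : f i = 0 := by omega
    rw [Finset.prod_eq_zero (Finset.mem_univ i), smul_zero]
    rw [hi0]
    split_ifs <;> simp [P, Q, hR, hb]
  rw [← Finset.sum_subset (Finset.filter_subset _ _) hz]
  apply Finset.sum_congr rfl
  intro f hf
  rw [prod_split δ s hs (fun j => R (f j)) (fun j => b (f j))]
  rw [div_eq_mul_inv, mul_smul]
  congr 1
  have : ∀ i : Fin δ, PowerSeries.coeff (f i) (if (i : ℕ) < s then P else Q)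
      = (((f i).factorial : ℝ)⁻¹) • (if (i : ℕ) < s then R (f i) else b (f i)) := by
    intro i
    split_ifs <;> simp [P, Q]
  simp only [this]
  simp only [Algebra.smul_def, Finset.prod_mul_distrib, map_prod, ← Finset.prod_inv_distrib]

lemma main_rec {A : Type*} [CommRing A] [Algebra ℝ A] (v : A) (p : ℝ) (φ : ℕ → ℝ)
    (r : ℕ → ℕ → ℝ) (b : ℕ → ℝ) (h : clusterRec p φ r b) (N : ℕ) :
    Rv v r (N+1) = (N.factorial : ℝ) • (v * ∑ δ ∈ Finset.range (N+1), (φ δ / (δ.factorial : ℝ)) •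
      PowerSeries.coeff N ((PowerSeries.mk fun n => ((n.factorial : ℝ)⁻¹) •
        (p • Rv v r n + (1 - p) • algebraMap ℝ A (b n))) ^ δ)) := by
  have hr := supp p φ r b h
  have hsplit : (PowerSeries.mk fun n => ((n.factorial : ℝ)⁻¹) •
        (p • Rv v r n + (1 - p) • algebraMap ℝ A (b n))) =
      p • (PowerSeries.mk fun n => ((n.factorial : ℝ)⁻¹) • Rv v r n) +
      (1 - p) • (PowerSeries.mk fun n => ((n.factorial : ℝ)⁻¹) • algebraMap ℝ A (b n)) := by
    ext n
    simp only [PowerSeries.coeff_mk, map_add, smul_add, PowerSeries.coeff_smul]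
    rw [smul_comm p, smul_comm (1-p)]
  have hR0 : Rv v r 0 = 0 := by simp [Rv]
  have hb0 : algebraMap ℝ A (b 0) = 0 := by simp [h.1 0]
  have e1 : Rv v r (N+1) = ∑ j ∈ Finset.range (N+1), r (N+1) (j+1) • v ^ (j+1) := by
    rw [Rv, Finset.range_eq_Ico, Finset.sum_Ico_add' (fun j => r (N+1) j • v ^ j) 0 (N+1) 1]
    rfl
  rw [e1]
  simp only [h.2 (N+1) _ (Nat.le_add_left 1 N) (Nat.le_add_left 1 _), Nat.add_sub_cancel, Finset.sum_smul]
  rw [Finset.sum_comm, Finset.mul_sum, Finset.smul_sum]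
  apply Finset.sum_congr rfl
  intro δ hδ
  rw [Finset.sum_comm, hsplit, add_pow]
  have hR : ∀ s ∈ Finset.range (δ + 1), ∀ hs : s ≤ δ, 
    (∑ y ∈ Finset.range (N+1), ((δ.choose s : ℝ) * (φ δ / (δ.factorial : ℝ)) *
          ∑ f ∈ (Finset.Nat.antidiagonalTuple δ N).filter (fun f => ∀ i, 1 ≤ f i),
            ((N.factorial : ℝ) / ∏ i, ((f i).factorial : ℝ)) *
              ∑ g ∈ (Finset.Nat.antidiagonalTuple s y).filter (fun g => ∀ i, 1 ≤ g i),
                p ^ s * (1 - p) ^ (δ - s) *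
                  (∏ i : Fin s, r (f (Fin.castLE hs i)) (g i)) *
                  ∏ j ∈ Finset.univ.filter (fun j : Fin δ => s ≤ (j : ℕ)), b (f j)) • v ^ (y+1))
      = ((δ.choose s : ℝ) * (φ δ / (δ.factorial : ℝ)) * (p ^ s * (1 - p) ^ (δ - s)) * (N.factorial : ℝ)) •
        (v * PowerSeries.coeff N
        ((PowerSeries.mk fun n => ((n.factorial : ℝ)⁻¹) • Rv v r n) ^ s *
          (PowerSeries.mk fun n => ((n.factorial : ℝ)⁻¹) • algebraMap ℝ A (b n)) ^ (δ - s))) := by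
    intro s _ hs
    rw [mul_smul _ (N.factorial : ℝ), ← mul_smul_comm, ← fsum (Rv v r) (fun n => algebraMap ℝ A (b n)) hR0 hb0 δ s N hs]
    simp only [mul_smul _ _ (v ^ _)]
    rw [← Finset.smul_sum]
    rw [mul_smul _ (p ^ s * (1 - p) ^ (δ - s))]
    congr 1
    simp only [Finset.sum_smul]
    rw [Finset.sum_comm, Finset.mul_sum, Finset.smul_sum]
    apply Finset.sum_congr rfl
    intro f hf
    simp only [Finset.mem_filter, Finset.Nat.mem_antidiagonalTuple] at hf
    simp only [mul_smul _ _ (v ^ _)]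
    rw [← Finset.smul_sum, mul_smul_comm, smul_comm (p ^ s * (1 - p) ^ (δ - s))]
    congr 1
    have hle : ∑ i : Fin s, f (Fin.castLE hs i) ≤ N := by
      rw [← hf.1]
      have := Finset.sum_map (Finset.univ : Finset (Fin s)) (Fin.castLEEmb hs) f
      simp only [Fin.coe_castLEEmb] at this
      rw [← this]
      exact Finset.sum_le_sum_of_subset (Finset.subset_univ _)
    have hg := gsum v r hr s N (fun i => f (Fin.castLE hs i)) (fun i => hf.2 _) hle
    have hg' : ∏ i : Fin s, Rv v r (f (Fin.castLE hs i)) = _ := hg.symm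
    rw [hg', Finset.sum_mul, Finset.mul_sum, Finset.smul_sum]
    apply Finset.sum_congr rfl
    intro y _
    rw [Finset.sum_smul, Finset.sum_mul, Finset.mul_sum, Finset.smul_sum]
    apply Finset.sum_congr rfl
    intro g _
    rw [← map_prod]
    simp only [Algebra.smul_def, map_mul, pow_succ]
    ring
  have hR2 := fun s : {x // x ∈ Finset.range (δ+1)} => hR s.1 s.2 (Nat.lt_succ_iff.mp (Finset.mem_range.mp s.2))
  rw [Finset.sum_congr rfl (fun s _ => hR2 s)]
  rw [Finset.sum_attach (Finset.range (δ+1)) (fun s => ((δ.choose s : ℝ) * (φ δ / (δ.factorial : ℝ)) * (p ^ s * (1 - p) ^ (δ - s)) * (N.factorial : ℝ)) •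
        (v * PowerSeries.coeff N
        ((PowerSeries.mk fun n => ((n.factorial : ℝ)⁻¹) • Rv v r n) ^ s *
          (PowerSeries.mk fun n => ((n.factorial : ℝ)⁻¹) • algebraMap ℝ A (b n)) ^ (δ - s))))]
  rw [map_sum, Finset.smul_sum, Finset.mul_sum, Finset.smul_sum]
  apply Finset.sum_congr rfl
  intro s _
  rw [smul_pow, smul_pow, smul_mul_smul_comm, smul_mul_assoc, PowerSeries.coeff_smul, ← map_natCast (PowerSeries.C (R := A)),
    PowerSeries.coeff_mul_C]
  simp only [Algebra.smul_def, map_mul, map_natCast]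
  ring

open PowerSeries in
lemma dual_pow (Q : (DualNumber ℝ)⟦X⟧) (B M : ℝ⟦X⟧) (hB : ∀ n, (coeff n Q).fst = coeff n B)
    (hM : ∀ n, (coeff n Q).snd = coeff n M) (d : ℕ) : ∀ n,
    (coeff n (Q ^ d)).fst = coeff n (B ^ d) ∧
    (coeff n (Q ^ d)).snd = coeff n ((d : ℝ) • (B ^ (d - 1) * M)) := by
  induction d with
  | zero =>
    intro n
    simp only [pow_zero, coeff_one]
    split_ifs <;> simp
  | succ d ih =>
    intro n
    constructor
    · rw [pow_succ, pow_succ, coeff_mul, coeff_mul, TrivSqZeroExt.fst_sum]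
      exact Finset.sum_congr rfl fun x _ => by rw [TrivSqZeroExt.fst_mul, (ih _).1, hB]
    · have e : ((d + 1 : ℕ) : ℝ) • (B ^ (d + 1 - 1) * M) = B ^ d * M + ((d : ℝ) • (B ^ (d - 1) * M)) * B := by
        rcases d with _ | d
        · simp
        · simp only [Nat.add_sub_cancel, Algebra.smul_def]; push_cast; ring
      rw [e, pow_succ, coeff_mul, map_add, coeff_mul, coeff_mul, TrivSqZeroExt.snd_sum, ← Finset.sum_add_distrib]
      refine Finset.sum_congr rfl fun x _ => ?_
      rw [TrivSqZeroExt.snd_mul, (ih _).1, (ih _).2, hB, hM]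
      simp

open PowerSeries in
lemma subst_coeff (Φ B K : ℝ⟦X⟧) (hB : constantCoeff B = 0) (N : ℕ) :
    coeff N (K * Φ.subst B) = ∑ δ ∈ Finset.range (N+1), coeff δ Φ * coeff N (K * B ^ δ) := by
  have hs : HasSubst B := HasSubst.of_constantCoeff_zero' hB
  have hz : ∀ n d, n < d → coeff n (B ^ d) = 0 := by
    intro n d h
    apply coeff_of_lt_order
    have := le_order_pow_of_constantCoeff_eq_zero d hB
    exact lt_of_lt_of_le (by exact_mod_cast h) this
  have h1 : ∀ n ≤ N, coeff n (Φ.subst B : ℝ⟦X⟧) = ∑ δ ∈ Finset.range (N+1), coeff δ Φ * coeff n (B ^ δ) := by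
    intro n hn
    rw [coeff_subst' hs, finsum_eq_sum_of_support_subset]
    · rfl
    · intro d hd
      simp only [Finset.coe_range, Set.mem_Iio]
      by_contra hc
      apply hd
      simp [hz n d (by omega)]
  rw [coeff_mul]
  simp only [coeff_mul]
  simp only [Finset.mul_sum]
  rw [Finset.sum_comm]
  refine Finset.sum_congr rfl fun x hx => ?_
  rw [h1 x.2 (by have := Finset.HasAntidiagonal.mem_antidiagonal.mp hx; omega), Finset.mul_sum]
  refine Finset.sum_congr rfl fun d _ => by ring

open PowerSeries in
lemma to_ode (p : ℝ) (φ : ℕ → ℝ)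
    (r : ℕ → ℕ → ℝ) (b m : ℕ → ℝ) (h : clusterRec p φ r b)
    (hm : ∀ n, m n = ∑ j ∈ Finset.Icc 1 n, (j : ℝ) * r n j) (B M Φ : ℝ⟦X⟧)
    (hB : B = PowerSeries.mk fun n => b n / (n.factorial : ℝ))
    (hM : M = PowerSeries.mk fun n => m n / (n.factorial : ℝ))
    (hΦ : Φ = PowerSeries.mk fun n => φ n / (n.factorial : ℝ)) :
    d⁄dX ℝ B = Φ.subst B ∧ d⁄dX ℝ M = Φ.subst B + C p * M * (d⁄dX ℝ Φ).subst B := by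
  have hB0 : constantCoeff B = 0 := by
    rw [← coeff_zero_eq_constantCoeff_apply, hB, coeff_mk, h.1 0]; simp
  have hpow : ∀ k : ℕ, ((1 : DualNumber ℝ) + DualNumber.eps) ^ k = 1 + (k : ℝ) • DualNumber.eps := by
    intro k
    induction k with
    | zero => simp
    | succ k ih =>
      rw [pow_succ, ih]
      ext <;> simp <;> ring
  set v : DualNumber ℝ := 1 + DualNumber.eps with hv
  have hfst : ∀ n, (Rv v r n).fst = b n := by
    intro n
    rw [Rv, TrivSqZeroExt.fst_sum, h.1 n]
    refine Finset.sum_congr rfl fun k _ => ?_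
    rw [hpow]; simp
  have hsnd : ∀ n, (Rv v r n).snd = m n := by
    intro n
    rw [Rv, TrivSqZeroExt.snd_sum, hm n]
    refine Finset.sum_congr rfl fun k _ => ?_
    rw [hpow]; simp; ring
  have ha1 : ∀ c : ℝ, (algebraMap ℝ (DualNumber ℝ) c).fst = c := fun c => rfl
  have ha2 : ∀ c : ℝ, (algebraMap ℝ (DualNumber ℝ) c).snd = 0 := fun c => rfl
  have hQ := dual_pow (PowerSeries.mk fun n => ((n.factorial : ℝ)⁻¹) •
        (p • Rv v r n + (1 - p) • algebraMap ℝ (DualNumber ℝ) (b n))) B (C p * M)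
    (by
      intro n
      rw [coeff_mk, hB, coeff_mk]
      simp [hfst, ha1]; ring)
    (by
      intro n
      rw [coeff_mk, hM, coeff_C_mul, coeff_mk]
      simp [hsnd, ha2]; ring)
  have hrec := main_rec v p φ r b h
  have fac : ∀ N : ℕ, ((N+1).factorial : ℝ) = (N+1) * N.factorial := by
    intro N; rw [Nat.factorial_succ]; push_cast; ring
  have hF : ∀ N, coeff N (Φ.subst B : ℝ⟦X⟧) = ∑ δ ∈ Finset.range (N+1), (φ δ / (δ.factorial : ℝ)) * coeff N (B ^ δ) := by
    intro N
    have := subst_coeff Φ B 1 hB0 N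
    simpa [hΦ] using this
  have hG : ∀ N, coeff N (C p * M * (d⁄dX ℝ Φ).subst B : ℝ⟦X⟧) = ∑ δ ∈ Finset.range (N+1), (φ δ / (δ.factorial : ℝ)) * coeff N ((δ : ℝ) • (B ^ (δ - 1) * (C p * M))) := by
    intro N
    rw [subst_coeff _ B _ hB0 N]
    rw [Finset.sum_range_succ, Finset.sum_range_succ' (n := N)]
    have hM0 : constantCoeff M = 0 := by
      rw [← coeff_zero_eq_constantCoeff_apply, hM, coeff_mk, hm 0]; simp
    have hlast : coeff N (C p * M * B ^ N) = 0 := by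
      apply coeff_of_lt_order
      have h1 := le_order_pow_of_constantCoeff_eq_zero N hB0
      have h2 : 1 ≤ (C p * M).order := by
        rw [one_le_order_iff_constCoeff_eq_zero]; simp [hM0]
      calc (N : ℕ∞) < 1 + N := by
            rw [add_comm]; exact_mod_cast Nat.lt_succ_self N
        _ ≤ (C p * M).order + (B ^ N).order := add_le_add h2 h1
        _ ≤ (C p * M * B ^ N).order := le_order_mul _ _
    rw [hlast]
    simp only [Nat.cast_zero, zero_smul, map_zero, mul_zero, add_zero]
    refine Finset.sum_congr rfl fun d _ => ?_
    rw [coeff_derivative, hΦ, coeff_mk, coeff_smul, Nat.add_sub_cancel, mul_comm (C p * M)]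
    push_cast
    simp only [smul_eq_mul]
    ring
  constructor
  · ext N
    have h1 := congrArg TrivSqZeroExt.fst (hrec N)
    rw [hfst] at h1
    simp only [TrivSqZeroExt.fst_smul, TrivSqZeroExt.fst_mul, TrivSqZeroExt.fst_sum, (hQ _ _).1] at h1
    rw [hF, coeff_derivative]
    nth_rewrite 1 [hB]
    rw [coeff_mk, h1, fac]
    have : (N.factorial : ℝ) ≠ 0 := by positivity
    have : (N:ℝ)+1 ≠ 0 := by positivity
    simp [hv]
    field_simp
  · ext N
    have h1 := congrArg TrivSqZeroExt.snd (hrec N)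
    rw [hsnd] at h1
    simp only [TrivSqZeroExt.snd_smul, TrivSqZeroExt.snd_mul, TrivSqZeroExt.fst_sum, TrivSqZeroExt.snd_sum, TrivSqZeroExt.fst_smul, (hQ _ _).1, (hQ _ _).2] at h1
    rw [map_add, hF, hG, coeff_derivative]
    nth_rewrite 1 [hM]
    rw [coeff_mk, h1, fac]
    have : (N.factorial : ℝ) ≠ 0 := by positivity
    have : (N:ℝ)+1 ≠ 0 := by positivity
    simp only [hv, TrivSqZeroExt.fst_add, TrivSqZeroExt.snd_add, TrivSqZeroExt.fst_one, TrivSqZeroExt.snd_one, DualNumber.fst_eps, DualNumber.snd_eps, smul_eq_mul, op_smul_eq_mul]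
    field_simp
    ring


lemma choose_rec (a : ℝ) (n : ℕ) :
    Ring.choose a (n+1) * ((n:ℝ)+1) = (a - n) * Ring.choose a n := by
  rw [Ring.choose_eq_smul, Ring.choose_eq_smul, descPochhammer_succ_right]
  rw [Polynomial.smeval_mul]
  simp only [Polynomial.smeval_sub, Polynomial.smeval_X, Polynomial.smeval_natCast, Nat.factorial_succ, smul_eq_mul, pow_one, pow_zero, nsmul_eq_mul, mul_one]
  push_cast
  have : (n.factorial : ℝ) ≠ 0 := by positivity
  have : (n:ℝ)+1 ≠ 0 := by positivity
  field_simp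

lemma hasSum_of_rec (y : ℕ → ℝ) (c a x : ℝ) (hx : |c * x| < 1)
    (hy : ∀ n : ℕ, y (n+1) * ((n:ℝ)+1) = (c * n - c * a) * y n) :
    HasSum (fun n => y n * x ^ n) (y 0 * (1 - c * x) ^ a) := by
  have key : ∀ n, y n = y 0 * (Ring.choose a n * (-c) ^ n) := by
    intro n
    induction n with
    | zero => simp
    | succ n ih =>
      have h1 := hy n
      have h2 := choose_rec a n
      have h3 : (n:ℝ)+1 ≠ 0 := by positivity
      apply mul_right_cancel₀ h3
      rw [h1, ih, pow_succ]
      linear_combination (y 0 * (-c)^n * c) * h2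
  have h := (Real.one_add_rpow_hasFPowerSeriesOnBall_zero (a := a)).hasSum (y := - (c * x)) (by
    rw [← ENNReal.ofReal_one, Metric.eball_ofReal]; simpa using hx)
  simp only [binomialSeries_apply] at h
  have h' := h.mul_left (y 0)
  have e1 : (fun n => y n * x ^ n) =
      fun i => y 0 * Ring.choose a i • (List.ofFn fun _ : Fin i => -(c * x)).prod := by
    funext n
    rw [key n]
    simp [List.ofFn_const, ← neg_mul, mul_pow]; ring
  rw [e1]
  have e2 : (1 : ℝ) - c * x = 1 + (0 + -(c * x)) := by ring
  rw [e2]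
  exact h'

open PowerSeries in
lemma ode_lin (α p : ℝ) (B M Φ : ℝ⟦X⟧)
    (hB0 : constantCoeff B = 0) (hΦ0 : constantCoeff Φ = 1)
    (hΦ : (1 - X) * d⁄dX ℝ Φ = C (1/α) * Φ)
    (hB : d⁄dX ℝ B = Φ.subst B)
    (hM : d⁄dX ℝ M = Φ.subst B + C p * M * (d⁄dX ℝ Φ).subst B) :
    (1 - C (1 + 1/α) * X) * d⁄dX ℝ B = 1 - B ∧
    (1 - C (1 + 1/α) * X) * d⁄dX ℝ M = 1 - B + C (p/α) * M := by
  have hs : HasSubst B := HasSubst.of_constantCoeff_zero' hB0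
  have hG : (1 - B) * (d⁄dX ℝ Φ).subst B = C (1/α) * Φ.subst B := by
    have := congrArg (substAlgHom (R := ℝ) hs) hΦ
    rw [map_mul, map_mul, map_sub, map_one, substAlgHom_X] at this
    simp only [coe_substAlgHom] at this
    rw [subst_C] at this
    exact this
  have hF' : d⁄dX ℝ (Φ.subst B : ℝ⟦X⟧) = (d⁄dX ℝ Φ).subst B * d⁄dX ℝ B := derivative_subst hs
  set F : ℝ⟦X⟧ := Φ.subst B with hF
  set G : ℝ⟦X⟧ := (d⁄dX ℝ Φ).subst B with hGd
  have hF0 : constantCoeff F = 1 := by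
    have h := coeff_subst' hs Φ 0
    rw [finsum_eq_single _ 0] at h
    · simpa [hΦ0, hF] using h
    · intro n hn
      simp [hB0, hn]
  have hinv : F * F⁻¹ = 1 := PowerSeries.mul_inv_cancel F (by simp [hF0])
  have hW : (1 - B) * F⁻¹ = 1 - C (1 + 1/α) * X := by
    apply derivative.ext
    · simp only [map_sub, Derivation.leibniz, derivative_inv', smul_eq_mul, derivative_C, derivative_X, derivative_one, hF', hB]
      simp only [map_add, map_one]
      linear_combination (-F⁻¹^2 * F) * hG + (-1 - C (1/α) * (F * F⁻¹ + 1) - F⁻¹ * 0) * hinv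
    · simp [hB0, hF0]
  have h1 : (1 - C (1 + 1/α) * X) * F = 1 - B := by
    rw [← hW]; linear_combination (1 - B) * hinv
  have hUG : (1 - C (1 + 1/α) * X) * G = C (1/α) := by
    rw [← hW]; linear_combination F⁻¹ * hG + C (1/α) * hinv
  refine ⟨by rw [hB, h1], ?_⟩
  rw [hM]
  have : (C (p/α) : ℝ⟦X⟧) = C p * C (1/α) := by rw [← map_mul]; congr 1; ring
  rw [this]
  linear_combination h1 + C p * M * hUG

/-- for linear preferential attachment trees with parameter `α > 0`,
closed form for the EGF of the first moments of the root-cluster weights. -/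
theorem stmt4 (α p : ℝ) (hα : 0 < α) (hp0 : 0 < p) (hp1 : p < 1)
    (r : ℕ → ℕ → ℝ) (b : ℕ → ℝ)
    (hrec : clusterRec p (fun δ => Real.Gamma ((δ : ℝ) + 1 / α) / Real.Gamma (1 / α)) r b) :
    ∀ x : ℝ, |x| < α / (1 + α) →
      ∑' n : ℕ, (∑ j ∈ Finset.Icc 1 n, (j : ℝ) * r n j) * x ^ n / (n.factorial : ℝ)
        = (α / (p + α)) *
            ((1 - (1 + 1 / α) * x) ^ (-p / (1 + α)) - (1 - (1 + 1 / α) * x) ^ (α / (1 + α))) := by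

  intro x hx
  have hα1 : 0 < 1 + α := by positivity
  set φ : ℕ → ℝ := fun δ => Real.Gamma ((δ : ℝ) + 1 / α) / Real.Gamma (1 / α) with hφ
  set m : ℕ → ℝ := fun n => ∑ j ∈ Finset.Icc 1 n, (j : ℝ) * r n j with hm
  set B : PowerSeries ℝ := PowerSeries.mk fun n => b n / (n.factorial : ℝ) with hB
  set M : PowerSeries ℝ := PowerSeries.mk fun n => m n / (n.factorial : ℝ) with hM
  set Φ : PowerSeries ℝ := PowerSeries.mk fun n => φ n / (n.factorial : ℝ) with hΦ
  have hG : Real.Gamma (1 / α) ≠ 0 := (Real.Gamma_pos_of_pos (by positivity)).ne'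
  have hφs : ∀ n : ℕ, φ (n+1) = (n + 1/α) * φ n := by
    intro n
    have h1 : (n:ℝ) + 1/α ≠ 0 := by positivity
    simp only [hφ]
    push_cast
    rw [show (n:ℝ) + 1 + 1/α = (n + 1/α) + 1 by ring, Real.Gamma_add_one h1]
    ring
  have hφ0 : φ 0 = 1 := by simp only [hφ, Nat.cast_zero, zero_add]; exact div_self hG
  have hB0 : PowerSeries.constantCoeff B = 0 := by
    rw [← PowerSeries.coeff_zero_eq_constantCoeff_apply, hB, PowerSeries.coeff_mk, hrec.1 0]; simp
  have hM0 : PowerSeries.constantCoeff M = 0 := by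
    rw [← PowerSeries.coeff_zero_eq_constantCoeff_apply, hM, PowerSeries.coeff_mk]; simp [hm]
  have hΦ0 : PowerSeries.constantCoeff Φ = 1 := by
    rw [← PowerSeries.coeff_zero_eq_constantCoeff_apply, hΦ, PowerSeries.coeff_mk, hφ0]; simp
  have hΦd : (1 - PowerSeries.X) * PowerSeries.derivative ℝ Φ = PowerSeries.C (1/α) * Φ := by
    ext n
    rw [sub_mul, one_mul, map_sub, PowerSeries.coeff_C_mul, PowerSeries.coeff_derivative]
    rcases n with _ | n
    · simp [hΦ, hφs, hφ0]
    · rw [mul_comm PowerSeries.X, PowerSeries.coeff_succ_mul_X, PowerSeries.coeff_derivative]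
      simp only [hΦ, PowerSeries.coeff_mk]
      rw [hφs (n+1), Nat.factorial_succ (n+1)]
      push_cast
      have h1 : ((n+1).factorial : ℝ) ≠ 0 := by positivity
      have h2 : (n:ℝ) + 1 + 1 ≠ 0 := by positivity
      field_simp
      ring
  obtain ⟨o1, o2⟩ := to_ode p φ r b m hrec (fun n => rfl) B M Φ hB hM hΦ
  obtain ⟨l1, l2⟩ := ode_lin α p B M Φ hB0 hΦ0 hΦd o1 o2
  have hpα : p + α ≠ 0 := by positivity
  have hcx : |(1 + 1/α) * x| < 1 := by
    rw [abs_mul, abs_of_pos (by positivity : (0:ℝ) < 1 + 1/α)]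
    rw [lt_div_iff₀ hα1] at hx
    have : (1 + 1/α) * |x| = (|x| * (1 + α)) / α := by field_simp; ring
    rw [this, div_lt_one hα]; exact hx
  have cf : ∀ (Y : PowerSeries ℝ) (n : ℕ), PowerSeries.coeff n
      ((1 - PowerSeries.C (1 + 1/α) * PowerSeries.X) * PowerSeries.derivative ℝ Y)
      = PowerSeries.coeff (n+1) Y * (n+1) - (1 + 1/α) * n * PowerSeries.coeff n Y := by
    intro Y n
    rw [sub_mul, one_mul, map_sub, mul_assoc, PowerSeries.coeff_C_mul, PowerSeries.coeff_derivative]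
    rcases n with _ | n
    · simp
    · rw [mul_comm PowerSeries.X, PowerSeries.coeff_succ_mul_X, PowerSeries.coeff_derivative]
      push_cast; ring
  have s1 := hasSum_of_rec (fun n => PowerSeries.coeff n (1 - B)) (1 + 1/α) (α/(1+α)) x hcx (by
    intro n
    have h1 := cf (1 - B) n
    have h2 : PowerSeries.derivative ℝ (1 - B) = - PowerSeries.derivative ℝ B := by
      rw [map_sub, PowerSeries.derivative_one, zero_sub]
    rw [h2, mul_neg, l1, map_neg] at h1
    have h3 : (1 + 1/α) * (α/(1+α)) = 1 := by field_simp; ring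
    rw [h3]
    linear_combination -h1)
  have s2 := hasSum_of_rec (fun n => PowerSeries.coeff n (M + PowerSeries.C (α/(p+α)) * (1 - B)))
    (1 + 1/α) (-p/(1+α)) x hcx (by
    intro n
    have h1 := cf (M + PowerSeries.C (α/(p+α)) * (1 - B)) n
    have h2 : PowerSeries.derivative ℝ (M + PowerSeries.C (α/(p+α)) * (1 - B))
        = PowerSeries.derivative ℝ M - PowerSeries.C (α/(p+α)) * PowerSeries.derivative ℝ B := by
      rw [map_add, Derivation.leibniz, PowerSeries.derivative_C, map_sub, PowerSeries.derivative_one]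
      simp [sub_eq_add_neg]
    have h4 : (1 - PowerSeries.C (1 + 1/α) * PowerSeries.X) *
        PowerSeries.derivative ℝ (M + PowerSeries.C (α/(p+α)) * (1 - B))
        = PowerSeries.C (p/α) * (M + PowerSeries.C (α/(p+α)) * (1 - B)) := by
      rw [h2]
      have h5 : (PowerSeries.C (p/α) * PowerSeries.C (α/(p+α)) : PowerSeries ℝ) =
          1 - PowerSeries.C (α/(p+α)) := by
        rw [← map_mul, ← map_one (PowerSeries.C (R := ℝ)), ← map_sub]
        congr 1
        field_simp; ring
      linear_combination l2 - PowerSeries.C (α/(p+α)) * l1 - (1 - B) * h5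
    rw [h4, PowerSeries.coeff_C_mul] at h1
    have h3 : (1 + 1/α) * (-p/(1+α)) = -(p/α) := by field_simp; ring
    rw [h3]
    linear_combination -h1)
  have s3 := s2.sub (s1.mul_left (α/(p+α)))
  have e1 : ∀ n, PowerSeries.coeff n (M + PowerSeries.C (α/(p+α)) * (1 - B)) * x ^ n
      - α/(p+α) * (PowerSeries.coeff n (1 - B) * x ^ n) = m n * x ^ n / (n.factorial : ℝ) := by
    intro n
    rw [map_add, PowerSeries.coeff_C_mul]
    have : PowerSeries.coeff n M = m n / (n.factorial : ℝ) := by rw [hM, PowerSeries.coeff_mk]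
    rw [this]; ring
  simp only [e1] at s3
  rw [s3.tsum_eq]
  simp [hB0, hM0]
  ring
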